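/- An auction consists of a finite set $M$ of indivisible items and agents $1,\dots,n$, each with a valuation $v_i:2^M\to\mathbb R$ that is nonnegative, monotone and satisfies $v_i(\emptyset)=0$. Its configuration LP has variables $y_{i,S}\in[0,1]$ for each agent $i$ and each $S\subseteq M$, and maximizes $\sum_{i,S}v_i(S)\,y_{i,S}$ subject to $\sum_S y_{i,S}\le 1$ for each agent $i$ and $\sum_{i,\,S\ni j}y_{i,S}\le 1$ for each item $j$. An integral allocation assigns pairwise disjoint bundles $X_1,\dots,X_n\subseteq M$ to the agents (items may remain unallocated); its social welfare is $\sum_i v_i(X_i)$. Fix an integer $m\ge 2$ and a real $\delta$ with $0<\delta<\frac{1}{2(m-1)}$, and consider the item set $M=\{1,\dots,m\}$ and two agents, where $v_1(\emptyset)=v_2(\emptyset)=0$ and, for every nonempty $S\subseteq M$, $v_1(S)=\frac12-\delta$ and $v_2(S)=\max(1,|S|/2)$. Then $v_1$ and $v_2$ are nonnegative, monotone and normalized, so this is an auction. The fractional solution of its configuration LP given by $y_{1,\{j\}}=\frac1m$ for every item $j$, $y_{2,\{j\}}=\frac{1}{m(m-1)}$ for every item $j$, and $y_{2,M}=\frac{m-2}{m-1}$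 (all other variables $0$) is feasible and has objective value $\frac m2+\frac{1}{2(m-1)}-\delta$, which is strictly greater than $\frac m2$. If moreover $m\ge 3$, then $\frac m2$ is the maximal social welfare of an integral allocation, so the fractional solution strictly beats every integral one. -/

import Mathlib

namespace Auction

/-- A valuation on bundles of items: nonnegative, monotone and normalized. -/
def IsValuation {M : Type*} (v : Finset M → ℝ) : Prop :=
  (∀ S, 0 ≤ v S) ∧ (∀ S T : Finset M, S ⊆ T → v S ≤ v T) ∧ v ∅ = 0

/-- An integral allocation: the agents' bundles are pairwise disjoint
(items outside all bundles are unallocated). -/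
def IsAllocation {N M : Type*} (X : N → Finset M) : Prop :=
  ∀ i k, i ≠ k → Disjoint (X i) (X k)

/-- Social welfare of an integral allocation. -/
def socialWelfare {N M : Type*} [Fintype N] (v : N → Finset M → ℝ) (X : N → Finset M) : ℝ :=
  ∑ i, v i (X i)

/-- Feasibility for the configuration LP: all variables lie in `[0,1]`, every agent receives total
weight at most one, and every item is used with total weight at most one. -/
def IsLPFeasible {N M : Type*} [Fintype N] [Fintype M] [DecidableEq M]
    (y : N → Finset M → ℝ) : Prop :=
  (∀ i S, y i S ∈ Set.Icc (0 : ℝ) 1) ∧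
  (∀ i, ∑ S : Finset M, y i S ≤ 1) ∧
  (∀ j : M, ∑ i, ∑ S : Finset M with j ∈ S, y i S ≤ 1)

/-- Objective value of the configuration LP. -/
def lpValue {N M : Type*} [Fintype N] [Fintype M]
    (v : N → Finset M → ℝ) (y : N → Finset M → ℝ) : ℝ :=
  ∑ i, ∑ S : Finset M, v i S * y i S

/-- The valuations of the two agents (agent `0` is the first one, agent `1` the second one). -/
noncomputable def exampleVal (m : ℕ) (δ : ℝ) : Fin 2 → Finset (Fin m) → ℝ :=
  ![fun S => if S = ∅ then 0 else 1 / 2 - δ,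
    fun S => if S = ∅ then 0 else max 1 ((S.card : ℝ) / 2)]

/-- The fractional solution. The bundles of cardinality one are the singletons `{j}`. -/
noncomputable def exampleSol (m : ℕ) : Fin 2 → Finset (Fin m) → ℝ :=
  ![fun S => if S.card = 1 then 1 / (m : ℝ) else 0,
    fun S => if S.card = 1 then 1 / ((m : ℝ) * ((m : ℝ) - 1))
      else if S = Finset.univ then ((m : ℝ) - 2) / ((m : ℝ) - 1) else 0]

end Auction

/-!
The fractional solution serves the first agent completely, at value `1 / 2 - δ`, and takes from the
second agent only a fraction `1 / (m - 1)` of the bundle of all items, replaced by singletons: a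
loss of `(m / 2 - 1) / (m - 1) = 1 / 2 - 1 / (2 * (m - 1))`. So it gains `1 / (2 * (m - 1)) - δ`
over giving all items to the second agent. Integrally, the first agent can only be served by a whole
item, which for `m ≥ 3` reduces the largest value the second agent can get by at least `1 / 2`.
-/

namespace Auction

section General

variable {N M : Type*}

theorem sum_filter_card_eq_one {A : Type*} [AddCommMonoid A] [Fintype M] (f : Finset M → A) :
    ∑ S : Finset M with S.card = 1, f S = ∑ j, f {j} := by
  simp only [Finset.univ_filter_card_eq, Finset.powersetCard_one, Finset.sum_map,
    Function.Embedding.coeFn_mk]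

theorem isValuation_ite_empty [DecidableEq M] {g : Finset M → ℝ} (hg : Monotone g)
    (hg₀ : 0 ≤ g ∅) : IsValuation fun S => if S = ∅ then 0 else g S := by
  have g_nonneg (S : Finset M) : 0 ≤ g S := hg₀.trans (hg S.empty_subset)
  refine ⟨fun S => ite_nonneg le_rfl (g_nonneg S), fun S T hST => ?_, if_pos rfl⟩
  dsimp only
  obtain rfl | hS := S.eq_empty_or_nonempty
  · rw [if_pos rfl]
    exact ite_nonneg le_rfl (g_nonneg T)
  · rw [if_neg hS.ne_empty, if_neg (hS.mono hST).ne_empty]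
    exact hg hST

theorem isLPFeasible_of_nonneg [Fintype N] [Fintype M] [DecidableEq M] {y : N → Finset M → ℝ}
    (y_nonneg : ∀ i S, 0 ≤ y i S) (agent_le : ∀ i, ∑ S, y i S ≤ 1)
    (item_le : ∀ j : M, ∑ i, ∑ S : Finset M with j ∈ S, y i S ≤ 1) : IsLPFeasible y :=
  ⟨fun i S => ⟨y_nonneg i S,
    (Finset.single_le_sum (fun T _ => y_nonneg i T) (Finset.mem_univ S)).trans (agent_le i)⟩,
    agent_le, item_le⟩

theorem IsAllocation.sum_card_le [Fintype N] [Fintype M] {X : N → Finset M}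
    (hX : IsAllocation X) : ∑ i, (X i).card ≤ Fintype.card M := by
  classical
  rw [← Finset.card_biUnion fun i _ k _ hik => hX i k hik]
  exact Finset.card_le_univ _

variable [DecidableEq N]

theorem isAllocation_update_empty (i : N) (S : Finset M) :
    IsAllocation (Function.update (fun _ => ∅) i S) := by
  intro k l hkl
  obtain rfl | hk := eq_or_ne k i
  · simp [Function.update_of_ne hkl.symm]
  · simp [Function.update_of_ne hk]

theorem socialWelfare_update_empty [Fintype N] {v : N → Finset M → ℝ} (hv : ∀ k, v k ∅ = 0)
    (i : N) (S : Finset M) :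
    socialWelfare v (Function.update (fun _ => ∅) i S) = v i S := by
  rw [socialWelfare, Fintype.sum_eq_single i fun k hk => by rw [Function.update_of_ne hk, hv],
    Function.update_self]

end General

section Valuations

variable {m : ℕ} {δ : ℝ}

theorem isValuation_exampleVal (hδ : δ ≤ 1 / 2) (i : Fin 2) :
    IsValuation (exampleVal m δ i) := by
  have hcard : Monotone fun S : Finset (Fin m) => max 1 ((S.card : ℝ) / 2) := by
    intro S T hST
    have := Finset.card_le_card hST
    dsimp only
    gcongr
  match i with
  | 0 => exact isValuation_ite_empty monotone_const (sub_nonneg.2 hδ)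
  | 1 => exact isValuation_ite_empty hcard (le_max_of_le_left zero_le_one)

theorem exampleVal_empty (i : Fin 2) : exampleVal m δ i ∅ = 0 := by
  fin_cases i <;> simp [exampleVal]

theorem exampleVal_zero_of_nonempty {S : Finset (Fin m)} (hS : S.Nonempty) :
    exampleVal m δ 0 S = 1 / 2 - δ :=
  if_neg hS.ne_empty

theorem exampleVal_one_of_nonempty {S : Finset (Fin m)} (hS : S.Nonempty) :
    exampleVal m δ 1 S = max 1 ((S.card : ℝ) / 2) :=
  if_neg hS.ne_empty

theorem exampleVal_one_le (S : Finset (Fin m)) :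
    exampleVal m δ 1 S ≤ max 1 ((S.card : ℝ) / 2) := by
  obtain rfl | hS := S.eq_empty_or_nonempty
  · rw [exampleVal_empty]
    exact le_max_of_le_left zero_le_one
  · exact (exampleVal_one_of_nonempty hS).le

theorem exampleVal_one_singleton (j : Fin m) : exampleVal m δ 1 {j} = 1 := by
  rw [exampleVal_one_of_nonempty (Finset.singleton_nonempty j), Finset.card_singleton]
  norm_num

theorem exampleVal_one_univ (hm : 2 ≤ m) : exampleVal m δ 1 Finset.univ = m / 2 := by
  have hm' : (2 : ℝ) ≤ m := by exact_mod_cast hm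
  have : NeZero m := ⟨by omega⟩
  rw [exampleVal_one_of_nonempty Finset.univ_nonempty, Finset.card_univ, Fintype.card_fin]
  exact max_eq_right (by linarith)

end Valuations

section FractionalSolution

variable {m : ℕ}

theorem sum_mul_exampleSol_zero (f : Finset (Fin m) → ℝ) :
    ∑ S, f S * exampleSol m 0 S = (∑ j, f {j}) / m := by
  rw [← sum_filter_card_eq_one, Finset.sum_filter, Finset.sum_div]
  refine Finset.sum_congr rfl fun S _ => ?_
  simp [exampleSol, div_eq_mul_inv]

theorem sum_mul_exampleSol_one (hm : m ≠ 1) (f : Finset (Fin m) → ℝ) :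
    ∑ S, f S * exampleSol m 1 S =
      (∑ j, f {j}) / (m * ((m : ℝ) - 1)) + f Finset.univ * (((m : ℝ) - 2) / ((m : ℝ) - 1)) := by
  rw [← sum_filter_card_eq_one, Finset.sum_filter, Finset.sum_div,
    ← Fintype.sum_ite_eq' Finset.univ fun S => f S * (((m : ℝ) - 2) / ((m : ℝ) - 1)),
    ← Finset.sum_add_distrib]
  refine Finset.sum_congr rfl fun S _ => ?_
  by_cases hS : S.card = 1
  · have hS_univ : S ≠ Finset.univ := by
      rintro rfl
      exact hm (by rwa [Finset.card_univ, Fintype.card_fin] at hS)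
    simp [exampleSol, hS, hS_univ, div_eq_mul_inv]
  · simp [exampleSol, hS]

theorem exampleSol_nonneg (hm : 2 ≤ m) (i : Fin 2) (S : Finset (Fin m)) :
    0 ≤ exampleSol m i S := by
  have hm₂ : 0 ≤ (m : ℝ) - 2 := sub_nonneg.2 (by exact_mod_cast hm)
  have hm₁ : 0 ≤ (m : ℝ) - 1 := by linarith
  match i with
  | 0 => exact ite_nonneg (by positivity) le_rfl
  | 1 => exact ite_nonneg (by positivity) (ite_nonneg (by positivity) le_rfl)

theorem sum_exampleSol (hm : 2 ≤ m) (i : Fin 2) : ∑ S, exampleSol m i S = 1 := by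
  have hm' : (2 : ℝ) ≤ m := by exact_mod_cast hm
  have hm₀ : (m : ℝ) ≠ 0 := by linarith
  have hm₁ : (m : ℝ) - 1 ≠ 0 := by linarith
  have sum_zero := sum_mul_exampleSol_zero (m := m) fun _ => 1
  have sum_one := sum_mul_exampleSol_one (m := m) (by omega) fun _ => 1
  simp only [one_mul, Finset.sum_const, Finset.card_univ, Fintype.card_fin, nsmul_eq_mul,
    mul_one] at sum_zero sum_one
  match i with
  | 0 => rw [sum_zero, div_self hm₀]
  | 1 =>
    rw [sum_one]
    field_simp
    ring

theorem sum_exampleSol_of_mem (hm : 2 ≤ m) (j : Fin m) :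
    ∑ i, ∑ S : Finset (Fin m) with j ∈ S, exampleSol m i S = 1 := by
  have hm' : (2 : ℝ) ≤ m := by exact_mod_cast hm
  have hm₀ : (m : ℝ) ≠ 0 := by linarith
  have hm₁ : (m : ℝ) - 1 ≠ 0 := by linarith
  have sum_zero := sum_mul_exampleSol_zero fun S => if j ∈ S then 1 else 0
  have sum_one := sum_mul_exampleSol_one (by omega) fun S => if j ∈ S then 1 else 0
  simp only [ite_mul, one_mul, zero_mul, Finset.mem_singleton, Finset.mem_univ, if_true,
    Finset.sum_ite_eq] at sum_zero sum_one
  rw [Fin.sum_univ_two, Finset.sum_filter, Finset.sum_filter, sum_zero, sum_one]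
  field_simp
  ring

theorem isLPFeasible_exampleSol (hm : 2 ≤ m) : IsLPFeasible (exampleSol m) :=
  isLPFeasible_of_nonneg (exampleSol_nonneg hm) (fun i => (sum_exampleSol hm i).le)
    fun j => (sum_exampleSol_of_mem hm j).le

theorem lpValue_exampleSol (hm : 2 ≤ m) (δ : ℝ) :
    lpValue (exampleVal m δ) (exampleSol m) = (m : ℝ) / 2 + 1 / (2 * ((m : ℝ) - 1)) - δ := by
  have hm' : (2 : ℝ) ≤ m := by exact_mod_cast hm
  have hm₀ : (m : ℝ) ≠ 0 := by linarith
  have hm₁ : (m : ℝ) - 1 ≠ 0 := by linarith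
  rw [lpValue, Fin.sum_univ_two, sum_mul_exampleSol_zero, sum_mul_exampleSol_one (by omega)]
  simp only [exampleVal_zero_of_nonempty (Finset.singleton_nonempty _), exampleVal_one_singleton,
    exampleVal_one_univ hm, Finset.sum_const, Finset.card_univ, Fintype.card_fin, nsmul_eq_mul]
  field_simp
  ring

end FractionalSolution

section IntegralOptimum

variable {m : ℕ} {δ : ℝ}

theorem socialWelfare_exampleVal_le (hm : 3 ≤ m) (hδ : 0 ≤ δ) {X : Fin 2 → Finset (Fin m)}
    (hX : IsAllocation X) : socialWelfare (exampleVal m δ) X ≤ m / 2 := by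
  have hm' : (3 : ℝ) ≤ m := by exact_mod_cast hm
  have card_le : ((X 0).card : ℝ) + (X 1).card ≤ m := by
    have := hX.sum_card_le
    rw [Fin.sum_univ_two, Fintype.card_fin] at this
    exact_mod_cast this
  have second_le := exampleVal_one_le (δ := δ) (X 1)
  rw [socialWelfare, Fin.sum_univ_two]
  obtain h_empty | h_nonempty := (X 0).eq_empty_or_nonempty
  · rw [h_empty, Finset.card_empty, Nat.cast_zero] at card_le
    calc exampleVal m δ 0 (X 0) + exampleVal m δ 1 (X 1)
        = exampleVal m δ 1 (X 1) := by rw [h_empty, exampleVal_empty, zero_add]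
      _ ≤ max 1 (((X 1).card : ℝ) / 2) := second_le
      _ ≤ m / 2 := max_le (by linarith) (by linarith)
  · have card_pos : (1 : ℝ) ≤ (X 0).card := by exact_mod_cast h_nonempty.card_pos
    calc exampleVal m δ 0 (X 0) + exampleVal m δ 1 (X 1)
        ≤ (1 / 2 - δ) + max 1 (((X 1).card : ℝ) / 2) :=
          add_le_add (exampleVal_zero_of_nonempty h_nonempty).le second_le
      _ ≤ (1 / 2 - δ) + (m - 1) / 2 := by
          gcongr
          exact max_le (by linarith) (by linarith)
      _ ≤ m / 2 := by linarith

theorem isGreatest_socialWelfare_exampleVal (hm : 3 ≤ m) (hδ : 0 ≤ δ) :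
    IsGreatest {w : ℝ | ∃ X : Fin 2 → Finset (Fin m),
      IsAllocation X ∧ w = socialWelfare (exampleVal m δ) X} ((m : ℝ) / 2) := by
  constructor
  · refine ⟨_, isAllocation_update_empty 1 Finset.univ, ?_⟩
    rw [socialWelfare_update_empty exampleVal_empty, exampleVal_one_univ (by omega)]
  · rintro _ ⟨X, hX, rfl⟩
    exact socialWelfare_exampleVal_le hm hδ hX

end IntegralOptimum

end Auction

theorem configuration_lp_fractional_beats_integral (m : ℕ) (hm : 2 ≤ m) (δ : ℝ) (hδ : 0 < δ)
    (hδ' : δ < 1 / (2 * ((m : ℝ) - 1))) :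
    (∀ i, Auction.IsValuation (Auction.exampleVal m δ i)) ∧
    Auction.IsLPFeasible (Auction.exampleSol m) ∧
    Auction.lpValue (Auction.exampleVal m δ) (Auction.exampleSol m)
      = (m : ℝ) / 2 + 1 / (2 * ((m : ℝ) - 1)) - δ ∧
    (m : ℝ) / 2 < Auction.lpValue (Auction.exampleVal m δ) (Auction.exampleSol m) ∧
    (3 ≤ m →
      IsGreatest {w : ℝ | ∃ X : Fin 2 → Finset (Fin m),
        Auction.IsAllocation X ∧ w = Auction.socialWelfare (Auction.exampleVal m δ) X}
        ((m : ℝ) / 2)) := by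
  have hδ_half : δ ≤ 1 / 2 := by
    have hm' : (2 : ℝ) ≤ m := by exact_mod_cast hm
    exact hδ'.le.trans (one_div_le_one_div_of_le two_pos (by linarith))
  have hval := Auction.lpValue_exampleSol hm δ
  refine ⟨Auction.isValuation_exampleVal hδ_half, Auction.isLPFeasible_exampleSol hm, hval, ?_,
    fun hm₃ => Auction.isGreatest_socialWelfare_exampleVal hm₃ hδ.le⟩
  rw [hval]
  linarith
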